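/- Theorem 5.1(i): Suppose the kernel k is homogeneous of degree β−1 for some β∈(0,2) with k(1,·)∈L^{1+ε}((0,1)) for some ε>0, and that x↦Φ̂(−x) is completely monotone on (0,∞). Let γ∈(β,2] and δ∈[γ,2]. Let A be a nonnegative random variable with E[e^{−λA}]=Φ̂(−λ^{γ/δ}) for all λ>0 (such A exists since x↦Φ̂(−x^{γ/δ}) is completely monotone), and let (Y_t)_{t≥0} be a jointly measurable real-valued stochastic process, independent of A, with E[e^{ipY_t}]=e^{−t^{δβ/γ}|p|^δ} for all t≥0 and p∈ℝ. Then E[e^{ip·A^{1/δ}Y_t}] = Φ̂(−|p|^γ t^β) for all p∈ℝ and t≥0, and the process (A^{1/δ}Y_t)_{t≥0} provides a stochastic solution to the one-dimensional evolution equation u(t,x)=u₀(x)+∫_0^t k(t,s) Δ^{γ/2}u(s,x) ds, where Δ^{γ/2} is the Fourier multiplier operator with symbol −|p|^γ. -/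

import Mathlib

open MeasureTheory Filter

noncomputable section

noncomputable def FT1 (f : ℝ → ℂ) (p : ℝ) : ℂ :=
  (((2 * Real.pi) ^ (-(1 : ℝ) / 2) : ℝ) : ℂ) *
    ∫ x : ℝ, Complex.exp (-Complex.I * ((p * x : ℝ) : ℂ)) * f x

noncomputable def FTinv1 (f : ℝ → ℂ) (x : ℝ) : ℂ :=
  (((2 * Real.pi) ^ (-(1 : ℝ) / 2) : ℝ) : ℂ) *
    ∫ p : ℝ, Complex.exp (Complex.I * ((p * x : ℝ) : ℂ)) * f p

noncomputable def Lop1 (ψ : ℝ → ℂ) (v : ℝ → ℂ) : ℝ → ℂ :=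
  FTinv1 fun p => -ψ p * FT1 v p

noncomputable def charFn1 {Ω : Type*} [MeasurableSpace Ω] (P : Measure Ω)
    (X : Ω → ℝ) (p : ℝ) : ℂ :=
  ∫ ω, Complex.exp (Complex.I * ((p * X ω : ℝ) : ℂ)) ∂P

def ProvidesSol1 {Ω : Type*} [MeasurableSpace Ω] (P : Measure Ω)
    (X : ℝ → Ω → ℝ) (k : ℝ → ℝ → ℝ) (ψ : ℝ → ℂ) : Prop :=
  ∀ u₀ : SchwartzMap ℝ ℂ,
    (∀ s : ℝ, 0 ≤ s →
      MeasureTheory.Integrable (fun p => ψ p * FT1 (fun y => ∫ ω, u₀ (y + X s ω) ∂P) p)) ∧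
    (∀ t : ℝ, 0 < t → ∀ x : ℝ,
      (∫ ω, u₀ (x + X t ω) ∂P) =
        u₀ x + ∫ s in Set.Ioc (0:ℝ) t,
          (k t s : ℂ) * Lop1 ψ (fun y => ∫ ω, u₀ (y + X s ω) ∂P) x) ∧
    (∀ x : ℝ,
      Filter.Tendsto (fun t : ℝ => ∫ ω, u₀ (x + X t ω) ∂P)
        (nhdsWithin 0 (Set.Ioi 0)) (nhds (u₀ x)))

noncomputable def coeff (k : ℝ → ℝ → ℝ) : ℕ → ℝ → ℝ
  | 0, _ => 1
  | n + 1, t => if 0 < t then ∫ s in Set.Ioc (0:ℝ) t, k t s * coeff k n s else 0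

noncomputable def Phi (k : ℝ → ℝ → ℝ) (t : ℝ) (l : ℂ) : ℂ :=
  ∑' n : ℕ, (coeff k n t : ℂ) * l ^ n

noncomputable def PhiR (k : ℝ → ℝ → ℝ) (t : ℝ) (x : ℝ) : ℝ :=
  ∑' n : ℕ, coeff k n t * x ^ n

noncomputable def chat (k : ℝ → ℝ → ℝ) (β : ℝ) : ℕ → ℝ
  | 0 => 1
  | n + 1 => chat k β n * ∫ s in Set.Ioc (0:ℝ) 1, k 1 s * s ^ (β * (n : ℝ))

noncomputable def PhiHatC (k : ℝ → ℝ → ℝ) (β : ℝ) (z : ℂ) : ℂ :=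
  ∑' n : ℕ, (chat k β n : ℂ) * z ^ n

noncomputable def PhiHatR (k : ℝ → ℝ → ℝ) (β : ℝ) (x : ℝ) : ℝ :=
  ∑' n : ℕ, chat k β n * x ^ n

def CMon (f : ℝ → ℝ) : Prop :=
  ContDiffOn ℝ (⊤ : ℕ∞) f (Set.Ioi 0) ∧
  ∀ (n : ℕ), ∀ x ∈ Set.Ioi (0:ℝ),
    0 ≤ (-1 : ℝ) ^ n * iteratedDerivWithin n f (Set.Ioi 0) x

/-!
On the Fourier side the evolution equation decouples in `p`. If `φ t p` is the characteristic
function of `X t`, then `y ↦ E[u₀ (y + X t)]` has transform `φ t * FT1 u₀`, so `X` provides a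
stochastic solution as soon as `φ` solves the scalar Volterra equation
`φ t p = 1 - ψ p * ∫ s in (0, t], k t s * φ s p` and `φ t p → 1` as `t ↓ 0`. The bound `‖φ‖ ≤ 1`,
automatic for a characteristic function, justifies Fubini and dominated convergence. For a
homogeneous kernel the recursion defining `chat` says exactly that
`φ t p = PhiHatC k β (-ψ p * t ^ β)` solves this equation. Finally, conditioning on `A` turns the
stable characteristic function of `Y t` into the Laplace transform of `A` evaluated at
`t ^ (δ * β / γ) * |p| ^ δ`, which is `PhiHatR k β (-(|p| ^ γ * t ^ β))`.
-/

open ProbabilityTheory Set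
open scoped Topology FourierTransform

section Fourier

theorem ft1_eq_fourier (f : ℝ → ℂ) (p : ℝ) :
    FT1 f p = ((2 * Real.pi) ^ (-(1 : ℝ) / 2) : ℝ) * 𝓕 f (p / (2 * Real.pi)) := by
  have hπ : (Real.pi : ℂ) ≠ 0 := by exact_mod_cast Real.pi_ne_zero
  rw [FT1, Real.fourier_real_eq_integral_exp_smul]
  congr! 4 with x
  push_cast
  field_simp

theorem ftinv1_eq_fourierInv (f : ℝ → ℂ) (x : ℝ) :
    FTinv1 f x = ((2 * Real.pi) ^ (-(1 : ℝ) / 2) : ℝ) * 𝓕⁻ f (x / (2 * Real.pi)) := by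
  have hπ : (Real.pi : ℂ) ≠ 0 := by exact_mod_cast Real.pi_ne_zero
  rw [FTinv1, Real.fourierInv_eq']
  congr! 4 with p
  simp only [RCLike.inner_apply, conj_trivial]
  push_cast
  field_simp

theorem fourierInv_comp_div (g : ℝ → ℂ) {c : ℝ} (hc : 0 < c) (x : ℝ) :
    𝓕⁻ (fun p => g (p / c)) (x / c) = c * 𝓕⁻ g x := by
  have hscale := Measure.integral_comp_div
    (fun q : ℝ => Complex.exp (↑(2 * Real.pi * inner ℝ q x) * Complex.I) • g q) c
  rw [abs_of_pos hc, Complex.real_smul] at hscale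
  rw [Real.fourierInv_eq', Real.fourierInv_eq', ← hscale]
  congr! 6 with p
  simp only [RCLike.inner_apply, conj_trivial]
  ring

theorem integrable_fourier_of_integrable_ft1 {f : ℝ → ℂ} (hf : Integrable (FT1 f)) :
    Integrable (𝓕 f) := by
  have hc : (((2 * Real.pi) ^ (-(1 : ℝ) / 2) : ℝ) : ℂ) ≠ 0 := by
    exact_mod_cast (by positivity : ((2 * Real.pi) ^ (-(1 : ℝ) / 2) : ℝ) ≠ 0)
  rw [funext (ft1_eq_fourier f), integrable_const_mul_iff hc.isUnit] at hf
  exact (integrable_comp_div_iff (𝓕 f) (by positivity)).1 hf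

theorem ftinv1_const_mul (c : ℂ) (h : ℝ → ℂ) (x : ℝ) :
    FTinv1 (fun p => c * h p) x = c * FTinv1 h x := by
  simp only [FTinv1, mul_left_comm _ c, integral_const_mul]

theorem ftinv1_ft1 {f : ℝ → ℂ} (hc : Continuous f) (hf : Integrable f)
    (hFf : Integrable (FT1 f)) (x : ℝ) : FTinv1 (FT1 f) x = f x := by
  have hconst :
      (2 * Real.pi) ^ (-(1 : ℝ) / 2) * (2 * Real.pi) ^ (-(1 : ℝ) / 2) * (2 * Real.pi) = 1 := by
    rw [← Real.rpow_add (by positivity), ← Real.rpow_add_one (by positivity)]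
    norm_num
  rw [funext (ft1_eq_fourier f), ftinv1_const_mul, ftinv1_eq_fourierInv,
    fourierInv_comp_div _ (by positivity),
    hc.fourierInv_fourier_eq hf (integrable_fourier_of_integrable_ft1 hFf),
    ← mul_assoc, ← mul_assoc, ← Complex.ofReal_mul, ← Complex.ofReal_mul, hconst,
    Complex.ofReal_one, one_mul]

theorem ft1_comp_add_right (f : ℝ → ℂ) (a p : ℝ) :
    FT1 (fun y => f (y + a)) p = Complex.exp (Complex.I * ((p * a : ℝ) : ℂ)) * FT1 f p := by
  have hshift := integral_add_right_eq_self (μ := volume)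
    (fun y => Complex.exp (-Complex.I * ((p * (y - a) : ℝ) : ℂ)) * f y) a
  simp only [add_sub_cancel_right] at hshift
  rw [FT1, FT1, hshift, mul_left_comm]
  congr 1
  rw [← integral_const_mul]
  congr with y
  rw [← mul_assoc, ← Complex.exp_add]
  congr 2
  push_cast
  ring

theorem ftinv1_add_right (h : ℝ → ℂ) (x a : ℝ) :
    FTinv1 h (x + a) = FTinv1 (fun p => Complex.exp (Complex.I * ((p * a : ℝ) : ℂ)) * h p) x := by
  rw [FTinv1, FTinv1]
  congr! 3 with p
  rw [← mul_assoc, ← Complex.exp_add]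
  congr 2
  push_cast
  ring

theorem integrable_exp_I_mul {h : ℝ → ℂ} (hh : Integrable h) (x : ℝ) :
    Integrable fun p => Complex.exp (Complex.I * ((p * x : ℝ) : ℂ)) * h p :=
  hh.bdd_mul (by fun_prop) (ae_of_all _ fun _ => (Complex.norm_exp_I_mul_ofReal _).le)

theorem ftinv1_add {g h : ℝ → ℂ} (hg : Integrable g) (hh : Integrable h) (x : ℝ) :
    FTinv1 (fun p => g p + h p) x = FTinv1 g x + FTinv1 h x := by
  simp only [FTinv1, mul_add]
  rw [integral_add (integrable_exp_I_mul hg x) (integrable_exp_I_mul hh x), mul_add]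

theorem integral_ft1 {α : Type*} [MeasurableSpace α] {μ : Measure α} [SFinite μ]
    {g : α → ℝ → ℂ} (hg : Integrable (Function.uncurry g) (μ.prod volume)) (p : ℝ) :
    ∫ a, FT1 (g a) p ∂μ = FT1 (fun y => ∫ a, g a y ∂μ) p := by
  have hint : Integrable (Function.uncurry fun a y =>
      Complex.exp (-Complex.I * ((p * y : ℝ) : ℂ)) * g a y) (μ.prod volume) :=
    hg.bdd_mul (c := 1) (by fun_prop) (ae_of_all _ fun z => by
      rw [neg_mul, ← mul_neg, ← Complex.ofReal_neg, Complex.norm_exp_I_mul_ofReal])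
  simp only [FT1]
  rw [integral_const_mul, integral_integral_swap hint]
  simp only [integral_const_mul]

theorem integral_ftinv1 {α : Type*} [MeasurableSpace α] {μ : Measure α} [SFinite μ]
    {g : α → ℝ → ℂ} (hg : Integrable (Function.uncurry g) (μ.prod volume)) (x : ℝ) :
    ∫ a, FTinv1 (g a) x ∂μ = FTinv1 (fun p => ∫ a, g a p ∂μ) x := by
  have hint : Integrable (Function.uncurry fun a p =>
      Complex.exp (Complex.I * ((p * x : ℝ) : ℂ)) * g a p) (μ.prod volume) :=
    hg.bdd_mul (c := 1) (by fun_prop)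
      (ae_of_all _ fun _ => (Complex.norm_exp_I_mul_ofReal _).le)
  simp only [FTinv1]
  rw [integral_const_mul, integral_integral_swap hint]
  simp only [integral_const_mul]

theorem tendsto_ftinv1_of_dominated {ι : Type*} {l : Filter ι} [l.IsCountablyGenerated]
    {g : ι → ℝ → ℂ} {h : ℝ → ℂ} {G : ℝ → ℝ} (hG : Integrable G)
    (hgm : ∀ᶠ i in l, AEStronglyMeasurable (g i)) (hgG : ∀ᶠ i in l, ∀ᵐ p, ‖g i p‖ ≤ G p)
    (hgh : ∀ᵐ p, Tendsto (fun i => g i p) l (𝓝 (h p))) (x : ℝ) :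
    Tendsto (fun i => FTinv1 (g i) x) l (𝓝 (FTinv1 h x)) := by
  refine (tendsto_integral_filter_of_dominated_convergence G ?_ ?_ hG ?_).const_mul _
  · filter_upwards [hgm] with i hi
    exact AEStronglyMeasurable.mul (by fun_prop) hi
  · filter_upwards [hgG] with i hi
    simpa only [norm_mul, Complex.norm_exp_I_mul_ofReal, one_mul] using hi
  · filter_upwards [hgh] with p hp
    exact hp.const_mul _

theorem exists_schwartzMap_coe_eq_ft1 (u : SchwartzMap ℝ ℂ) :
    ∃ v : SchwartzMap ℝ ℂ, ⇑v = FT1 u := by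
  let dilation : ℝ ≃L[ℝ] ℝ := ContinuousLinearEquiv.unitsEquivAut ℝ
    (Units.mk0 (2 * Real.pi)⁻¹ (by positivity))
  refine ⟨(((2 * Real.pi) ^ (-(1 : ℝ) / 2) : ℝ) : ℂ) •
    SchwartzMap.compCLMOfContinuousLinearEquiv ℂ dilation (𝓕 u), funext fun p => ?_⟩
  rw [ft1_eq_fourier, ← SchwartzMap.fourier_coe, div_eq_mul_inv]
  rfl

theorem integrable_mul_schwartzMap {ψ : ℝ → ℂ} (hψm : AEStronglyMeasurable ψ) {C : ℝ} {n : ℕ}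
    (hψ : ∀ p, ‖ψ p‖ ≤ C * (1 + |p| ^ n)) (v : SchwartzMap ℝ ℂ) :
    Integrable fun p => ψ p * v p := by
  have hbound : Integrable fun p => C * (‖v p‖ + ‖p‖ ^ n * ‖v p‖) :=
    (v.integrable.norm.add (v.integrable_pow_mul volume n)).const_mul C
  refine hbound.mono' (hψm.mul v.integrable.aestronglyMeasurable) (ae_of_all _ fun p => ?_)
  calc ‖ψ p * v p‖ = ‖ψ p‖ * ‖v p‖ := norm_mul _ _
    _ ≤ C * (1 + |p| ^ n) * ‖v p‖ := by gcongr; exact hψ p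
    _ = C * (‖v p‖ + ‖p‖ ^ n * ‖v p‖) := by rw [Real.norm_eq_abs]; ring

theorem integrable_ft1 (u : SchwartzMap ℝ ℂ) : Integrable (FT1 u) := by
  obtain ⟨v, hv⟩ := exists_schwartzMap_coe_eq_ft1 u
  exact hv ▸ v.integrable

theorem integrable_mul_ft1 {ψ : ℝ → ℂ} (hψm : AEStronglyMeasurable ψ) {C : ℝ} {n : ℕ}
    (hψ : ∀ p, ‖ψ p‖ ≤ C * (1 + |p| ^ n)) (u : SchwartzMap ℝ ℂ) :
    Integrable fun p => ψ p * FT1 u p := by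
  obtain ⟨v, hv⟩ := exists_schwartzMap_coe_eq_ft1 u
  simpa only [hv] using integrable_mul_schwartzMap hψm hψ v

end Fourier

section CharFn

variable {Ω : Type*} [MeasurableSpace Ω] {P : Measure Ω} {X : Ω → ℝ}

theorem charFn1_eq_charFun_map (hX : AEMeasurable X P) : charFn1 P X = charFun (P.map X) := by
  ext p
  rw [charFun_apply_real, integral_map hX (by fun_prop), charFn1]
  congr! 3 with ω
  push_cast
  ring

theorem continuous_charFn1 [IsFiniteMeasure P] (hX : AEMeasurable X P) :
    Continuous (charFn1 P X) := by
  rw [charFn1_eq_charFun_map hX]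
  exact continuous_charFun

theorem norm_charFn1_le_one [IsProbabilityMeasure P] (hX : AEMeasurable X P) (p : ℝ) :
    ‖charFn1 P X p‖ ≤ 1 := by
  have := Measure.isProbabilityMeasure_map hX
  rw [charFn1_eq_charFun_map hX]
  exact norm_charFun_le_one p

theorem charFn1_mul_of_indepFun [IsFiniteMeasure P] {Y Z : Ω → ℝ} (hY : AEMeasurable Y P)
    (hZ : AEMeasurable Z P) (hYZ : IndepFun Y Z P) (p : ℝ) :
    charFn1 P (fun ω => Z ω * Y ω) p = ∫ ω, charFn1 P Y (p * Z ω) ∂P := by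
  let F : ℝ × ℝ → ℂ := fun z => Complex.exp (Complex.I * ((p * (z.2 * z.1) : ℝ) : ℂ))
  have hF : StronglyMeasurable F := Continuous.stronglyMeasurable (by fun_prop)
  have hFint : Integrable F ((P.map Y).prod (P.map Z)) :=
    Integrable.of_bound hF.aestronglyMeasurable 1
      (ae_of_all _ fun _ => (Complex.norm_exp_I_mul_ofReal _).le)
  calc charFn1 P (fun ω => Z ω * Y ω) p
      = ∫ z, F z ∂P.map fun ω => (Y ω, Z ω) :=
        (integral_map (hY.prodMk hZ) hF.aestronglyMeasurable).symm
    _ = ∫ z, ∫ y, F (y, z) ∂P.map Y ∂P.map Z := by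
        rw [hYZ.map_prod_eq_prod_map_map hY hZ, integral_prod_symm _ hFint]
    _ = ∫ ω, ∫ y, F (y, Z ω) ∂P.map Y ∂P :=
        integral_map hZ hF.integral_prod_left'.aestronglyMeasurable
    _ = ∫ ω, charFn1 P Y (p * Z ω) ∂P := by
        congr with ω
        rw [integral_map hY (by fun_prop), charFn1]
        simp only [F, mul_assoc]

theorem integrable_uncurry_comp_add [IsFiniteMeasure P] (hX : AEMeasurable X P) {f : ℝ → ℂ}
    (hfm : Measurable f) (hf : Integrable f) :
    Integrable (Function.uncurry fun ω y => f (y + X ω)) (P.prod volume) := by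
  have hsum : AEMeasurable (fun z : Ω × ℝ => z.2 + X z.1) (P.prod volume) := by fun_prop
  refine (integrable_prod_iff (hfm.comp_aemeasurable hsum).aestronglyMeasurable).2
    ⟨ae_of_all _ fun ω => hf.comp_add_right (X ω), ?_⟩
  simp only [Function.comp_apply, integral_add_right_eq_self fun y => ‖f y‖]
  exact integrable_const _

theorem ft1_integral_comp_add [IsFiniteMeasure P] (hX : AEMeasurable X P) {f : ℝ → ℂ}
    (hfm : Measurable f) (hf : Integrable f) (p : ℝ) :
    FT1 (fun y => ∫ ω, f (y + X ω) ∂P) p = charFn1 P X p * FT1 f p := by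
  rw [← integral_ft1 (integrable_uncurry_comp_add hX hfm hf)]
  simp only [ft1_comp_add_right, integral_mul_const, charFn1]

theorem integral_ftinv1_comp_add [IsFiniteMeasure P] (hX : AEMeasurable X P) {h : ℝ → ℂ}
    (hh : Integrable h) (x : ℝ) :
    ∫ ω, FTinv1 h (x + X ω) ∂P = FTinv1 (fun p => charFn1 P X p * h p) x := by
  have hint : Integrable (Function.uncurry fun ω p =>
      Complex.exp (Complex.I * ((p * X ω : ℝ) : ℂ)) * h p) (P.prod volume) :=
    (hh.comp_snd P).bdd_mul (c := 1)
      (by fun_prop : AEMeasurable (fun z : Ω × ℝ =>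
        Complex.exp (Complex.I * ((z.2 * X z.1 : ℝ) : ℂ))) (P.prod volume)).aestronglyMeasurable
      (ae_of_all _ fun _ => (Complex.norm_exp_I_mul_ofReal _).le)
  simp only [ftinv1_add_right h x, integral_ftinv1 hint, integral_mul_const, charFn1]

end CharFn

section Subordination

variable {Ω : Type*} [MeasurableSpace Ω] {P : Measure Ω} {A : Ω → ℝ}

theorem CMon.congr {f g : ℝ → ℝ} (hf : CMon f) (hgf : EqOn g f (Ioi 0)) : CMon g :=
  ⟨hf.1.congr hgf, fun n x hx => by
    rw [iteratedDerivWithin_congr hgf hx]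
    exact hf.2 n x hx⟩

theorem integrable_exp_mul_neg [IsFiniteMeasure P] (hA : AEMeasurable A P) (hA0 : 0 ≤ᵐ[P] A)
    {l : ℝ} (hl : 0 ≤ l) : Integrable (fun ω => Real.exp (l * -A ω)) P := by
  refine Integrable.of_bound (by fun_prop) 1 ?_
  filter_upwards [hA0] with ω hω
  have : 0 ≤ l * A ω := mul_nonneg hl hω
  rw [Real.norm_eq_abs, Real.abs_exp, Real.exp_le_one_iff]
  linarith

theorem cmon_integral_exp_neg_mul [IsFiniteMeasure P] (hA : AEMeasurable A P)
    (hA0 : 0 ≤ᵐ[P] A) : CMon fun l => ∫ ω, Real.exp (-(l * A ω)) ∂P := by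
  have hmgf : (fun l => ∫ ω, Real.exp (-(l * A ω)) ∂P) = mgf (fun ω => -A ω) P := by
    ext l
    simp only [mgf, mul_neg]
  have hsub : Ioi 0 ⊆ interior (integrableExpSet (fun ω => -A ω) P) :=
    interior_maximal (fun l hl => integrable_exp_mul_neg hA hA0 (le_of_lt hl)) isOpen_Ioi
  rw [hmgf]
  refine ⟨(analyticOnNhd_mgf.mono hsub).contDiffOn (uniqueDiffOn_Ioi 0), fun n l hl => ?_⟩
  rw [iteratedDerivWithin_of_isOpen isOpen_Ioi hl, iteratedDeriv_mgf (hsub hl),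
    ← integral_const_mul]
  refine integral_nonneg_of_ae ?_
  filter_upwards [hA0] with ω hω
  have hsign : (-1 : ℝ) ^ n * (-A ω) ^ n = A ω ^ n := by rw [← mul_pow]; ring
  rw [← mul_assoc, hsign]
  exact mul_nonneg (pow_nonneg hω n) (Real.exp_nonneg _)

theorem charFn1_rpow_mul_of_stable [IsFiniteMeasure P] {Y : Ω → ℝ} (hA : AEMeasurable A P)
    (hA0 : 0 ≤ᵐ[P] A) (hY : AEMeasurable Y P) (hYA : IndepFun Y A P) {c δ : ℝ} (hδ : δ ≠ 0)
    (hYchar : ∀ p : ℝ, charFn1 P Y p = Complex.exp (-((c * |p| ^ δ : ℝ) : ℂ))) (p : ℝ) :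
    charFn1 P (fun ω => A ω ^ (1 / δ) * Y ω) p =
      ((∫ ω, Real.exp (-(c * |p| ^ δ * A ω)) ∂P : ℝ) : ℂ) := by
  have hYA' : IndepFun Y (fun ω => A ω ^ (1 / δ)) P :=
    hYA.comp measurable_id (measurable_id.pow_const (1 / δ))
  rw [charFn1_mul_of_indepFun hY (by fun_prop) hYA', ← integral_complex_ofReal]
  refine integral_congr_ae ?_
  filter_upwards [hA0] with ω hω
  have hscale : |p * A ω ^ (1 / δ)| ^ δ = |p| ^ δ * A ω := by
    rw [abs_mul, abs_of_nonneg (Real.rpow_nonneg hω _),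
      Real.mul_rpow (abs_nonneg p) (Real.rpow_nonneg hω _), one_div, Real.rpow_inv_rpow hω hδ]
  rw [hYchar, hscale, ← mul_assoc]
  push_cast
  rfl

end Subordination

section Kernel

theorem integrable_of_integrable_abs_rpow {α : Type*} [MeasurableSpace α] {μ : Measure α}
    [IsFiniteMeasure μ] {f : α → ℝ} (hfm : AEStronglyMeasurable f μ) {q : ℝ} (hq : 1 ≤ q)
    (hf : Integrable (fun a => |f a| ^ q) μ) : Integrable f μ := by
  have hq0 : (ENNReal.ofReal q).toReal = q := ENNReal.toReal_ofReal (zero_le_one.trans hq)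
  have hLp : MemLp f (ENNReal.ofReal q) μ :=
    (integrable_norm_rpow_iff hfm (by positivity) ENNReal.ofReal_ne_top).1 (by rwa [hq0])
  exact hLp.integrable (ENNReal.one_le_ofReal.2 hq)

theorem rpow_mul_natCast_eq_pow {r : ℝ} (hr : 0 ≤ r) (β : ℝ) (n : ℕ) :
    r ^ (β * (n : ℝ)) = (r ^ β) ^ n := by
  rw [Real.rpow_mul hr, Real.rpow_natCast]

theorem integrableOn_mul_rpow {f : ℝ → ℝ} (hf : IntegrableOn f (Ioc 0 1)) {a : ℝ} (ha : 0 ≤ a) :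
    IntegrableOn (fun r => f r * r ^ a) (Ioc 0 1) :=
  hf.mul_continuousOn_of_subset (Real.continuous_rpow_const ha).continuousOn measurableSet_Ioc
    isCompact_Icc Ioc_subset_Icc_self

theorem norm_mul_rpow_le {r a : ℝ} (hr : r ∈ Ioc 0 1) (ha : 0 ≤ a) (x : ℝ) :
    ‖x * r ^ a‖ ≤ ‖x‖ := by
  rw [norm_mul, Real.norm_of_nonneg (Real.rpow_nonneg hr.1.le a)]
  exact mul_le_of_le_one_right (norm_nonneg x) (Real.rpow_le_one hr.1.le hr.2 ha)

theorem tendsto_setIntegral_mul_rpow_atTop {f : ℝ → ℝ} (hf : IntegrableOn f (Ioc 0 1)) :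
    Tendsto (fun a : ℝ => ∫ r in Ioc (0 : ℝ) 1, f r * r ^ a) atTop (𝓝 0) := by
  suffices Tendsto (fun a : ℝ => ∫ r in Ioc (0 : ℝ) 1, f r * r ^ a) atTop
      (𝓝 (∫ _ in Ioc (0 : ℝ) 1, 0)) by simpa only [integral_zero] using this
  refine tendsto_integral_filter_of_dominated_convergence (‖f ·‖) ?_ ?_ hf.norm ?_
  · filter_upwards [eventually_ge_atTop 0] with a ha
    exact (integrableOn_mul_rpow hf ha).aestronglyMeasurable
  · filter_upwards [eventually_ge_atTop 0] with a ha
    exact ae_restrict_of_forall_mem measurableSet_Ioc fun r hr => norm_mul_rpow_le hr ha (f r)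
  · rw [← restrict_Ioo_eq_restrict_Ioc]
    refine ae_restrict_of_forall_mem measurableSet_Ioo fun r hr => ?_
    simpa only [mul_zero] using
      (tendsto_rpow_atTop_of_base_lt_one r (neg_one_lt_zero.trans hr.1) hr.2).const_mul (f r)

/-- `k` is homogeneous of degree `d` as a Volterra kernel: the scaling law
`k (t * r) (t * s) = t ^ d * k r s` is imposed only at `r = 1` and for `s` below the diagonal. -/
def IsHomogeneousKernel (k : ℝ → ℝ → ℝ) (d : ℝ) : Prop :=
  ∀ t : ℝ, 0 < t → ∀ s ∈ Ioo (0 : ℝ) 1, k t (t * s) = t ^ d * k 1 s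

namespace IsHomogeneousKernel

variable {k : ℝ → ℝ → ℝ} {d : ℝ}

theorem eqOn (hk : IsHomogeneousKernel k d) {t : ℝ} (ht : 0 < t) :
    EqOn (k t) (fun s => t ^ d * k 1 (t⁻¹ * s)) (Ioo 0 t) := by
  intro s hs
  have hmem : t⁻¹ * s ∈ Ioo (0 : ℝ) 1 :=
    ⟨by have := hs.1; positivity, by rw [inv_mul_lt_one₀ ht]; exact hs.2⟩
  simpa only [mul_inv_cancel_left₀ ht.ne'] using hk t ht _ hmem

theorem integrableOn (hk : IsHomogeneousKernel k d) (hk1 : IntegrableOn (k 1) (Ioc 0 1)) {t : ℝ}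
    (ht : 0 < t) : IntegrableOn (k t) (Ioc 0 t) := by
  have hscaled : IntervalIntegrable (fun s => t ^ d * k 1 (t⁻¹ * s)) volume 0 t := by
    have hk1' := (intervalIntegrable_iff_integrableOn_Ioc_of_le zero_le_one).2 hk1
    simpa only [zero_div, one_div, inv_inv] using
      (hk1'.comp_mul_left (c := t⁻¹)).const_mul (t ^ d)
  rw [intervalIntegrable_iff_integrableOn_Ioo_of_le ht.le] at hscaled
  rw [integrableOn_Ioc_iff_integrableOn_Ioo]
  exact hscaled.congr_fun (hk.eqOn ht).symm measurableSet_Ioo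

theorem setIntegral_mul (hk : IsHomogeneousKernel k d) (F : ℝ → ℂ) {t : ℝ} (ht : 0 < t) :
    ∫ s in Ioc 0 t, (k t s : ℂ) * F s =
      ((t ^ (d + 1) : ℝ) : ℂ) * ∫ r in Ioc (0 : ℝ) 1, (k 1 r : ℂ) * F (t * r) := by
  have hsubst := intervalIntegral.integral_comp_mul_left (a := 0) (b := 1)
    (fun s => (k t s : ℂ) * F s) ht.ne'
  rw [mul_zero, mul_one, intervalIntegral.integral_of_le zero_le_one,
    intervalIntegral.integral_of_le ht.le, Complex.real_smul] at hsubst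
  have hhom : ∫ r in Ioc (0 : ℝ) 1, (k t (t * r) : ℂ) * F (t * r) =
      ((t ^ d : ℝ) : ℂ) * ∫ r in Ioc (0 : ℝ) 1, (k 1 r : ℂ) * F (t * r) := by
    rw [← integral_const_mul, integral_Ioc_eq_integral_Ioo, integral_Ioc_eq_integral_Ioo]
    refine setIntegral_congr_fun measurableSet_Ioo fun r hr => ?_
    simp only [hk t ht r hr, Complex.ofReal_mul, mul_assoc]
  have ht0 : (t : ℂ) ≠ 0 := Complex.ofReal_ne_zero.2 ht.ne'
  rw [Real.rpow_add_one ht.ne', Complex.ofReal_mul, mul_comm _ (t : ℂ), mul_assoc, ← hhom, hsubst,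
    Complex.ofReal_inv, mul_inv_cancel_left₀ ht0]

end IsHomogeneousKernel

end Kernel

section Series

theorem continuous_tsum_mul_pow {c : ℕ → ℂ} (hc : ∀ z : ℂ, Summable fun n => c n * z ^ n) :
    Continuous fun z : ℂ => ∑' n, c n * z ^ n := by
  refine continuous_iff_continuousAt.2 fun z₀ => ?_
  let R : ℝ := ‖z₀‖ + 1
  have hsum : Summable fun n => ‖c n‖ * R ^ n := by
    refine (hc R).norm.congr fun n => ?_
    rw [norm_mul, norm_pow, Complex.norm_of_nonneg (by positivity)]
  have hon : ContinuousOn (fun z : ℂ => ∑' n, c n * z ^ n) (Metric.ball 0 R) := by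
    refine continuousOn_tsum (fun n => by fun_prop) hsum fun n z hz => ?_
    rw [mem_ball_zero_iff] at hz
    rw [norm_mul, norm_pow]
    gcongr
  exact hon.continuousAt (Metric.isOpen_ball.mem_nhds (by simp [R]))

variable {k : ℝ → ℝ → ℝ} {β : ℝ}

theorem phiHatC_ofReal (k : ℝ → ℝ → ℝ) (β x : ℝ) : PhiHatC k β x = PhiHatR k β x := by
  simp only [PhiHatC, PhiHatR]
  push_cast
  rfl

theorem phiHatC_zero (k : ℝ → ℝ → ℝ) (β : ℝ) : PhiHatC k β 0 = 1 := by
  rw [PhiHatC, tsum_eq_single 0 fun n hn => by rw [zero_pow hn, mul_zero]]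
  simp only [chat, Complex.ofReal_one, pow_zero, mul_one]

theorem phiHatR_zero (k : ℝ → ℝ → ℝ) (β : ℝ) : PhiHatR k β 0 = 1 := by
  exact_mod_cast (phiHatC_ofReal k β 0).symm.trans (phiHatC_zero k β)

theorem summable_chat_mul_pow (hβ : 0 < β) (hk : IntegrableOn (k 1) (Ioc 0 1)) (z : ℂ) :
    Summable fun n => (chat k β n : ℂ) * z ^ n := by
  have hratio : Tendsto (fun n : ℕ =>
      ‖((∫ s in Ioc (0 : ℝ) 1, k 1 s * s ^ (β * (n : ℝ)) : ℝ) : ℂ) * z‖) atTop (𝓝 0) := by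
    have hmoment := (tendsto_setIntegral_mul_rpow_atTop hk).comp
      ((tendsto_natCast_atTop_atTop (R := ℝ)).const_mul_atTop hβ)
    simpa using ((Complex.continuous_ofReal.tendsto 0).comp hmoment).mul_const z |>.norm
  refine summable_of_ratio_norm_eventually_le (r := 1 / 2) (by norm_num) ?_
  filter_upwards [hratio.eventually_le_const (by norm_num : (0 : ℝ) < 1 / 2)] with n hn
  calc ‖(chat k β (n + 1) : ℂ) * z ^ (n + 1)‖
      = ‖((∫ s in Ioc (0 : ℝ) 1, k 1 s * s ^ (β * (n : ℝ)) : ℝ) : ℂ) * z‖ *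
          ‖(chat k β n : ℂ) * z ^ n‖ := by
        rw [← norm_mul, chat, pow_succ, Complex.ofReal_mul]
        ring_nf
    _ ≤ 1 / 2 * ‖(chat k β n : ℂ) * z ^ n‖ := by gcongr

theorem continuous_phiHatC (hβ : 0 < β) (hk : IntegrableOn (k 1) (Ioc 0 1)) :
    Continuous (PhiHatC k β) :=
  continuous_tsum_mul_pow (summable_chat_mul_pow hβ hk)

theorem hasSum_setIntegral_mul_phiHatC (hβ : 0 < β) (hk : IntegrableOn (k 1) (Ioc 0 1)) (z : ℂ) :
    HasSum (fun n => (chat k β (n + 1) : ℂ) * z ^ n)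
      (∫ r in Ioc (0 : ℝ) 1, (k 1 r : ℂ) * PhiHatC k β (z * ((r ^ β : ℝ) : ℂ))) := by
  let F : ℕ → ℝ → ℂ := fun n r => ((k 1 r * r ^ (β * (n : ℝ)) : ℝ) : ℂ) * (chat k β n * z ^ n)
  have hF : ∀ n, IntegrableOn (F n) (Ioc 0 1) := fun n =>
    (integrableOn_mul_rpow hk (by positivity)).ofReal.mul_const _
  have hFnorm : ∀ n, ∫ r in Ioc (0 : ℝ) 1, ‖F n r‖ ≤
      (∫ r in Ioc (0 : ℝ) 1, ‖k 1 r‖) * ‖(chat k β n : ℂ) * z ^ n‖ := fun n => by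
    rw [← integral_mul_const]
    refine setIntegral_mono_on (hF n).norm (hk.norm.mul_const _) measurableSet_Ioc fun r hr => ?_
    rw [norm_mul, Complex.norm_real]
    gcongr
    exact norm_mul_rpow_le hr (by positivity) _
  have hsum := hasSum_integral_of_summable_integral_norm hF <|
    ((summable_chat_mul_pow hβ hk z).norm.mul_left _).of_nonneg_of_le
      (fun n => integral_nonneg fun r => norm_nonneg _) hFnorm
  convert! hsum using 1
  · ext n
    rw [integral_mul_const, integral_complex_ofReal, chat, Complex.ofReal_mul]
    ring
  · refine setIntegral_congr_fun measurableSet_Ioc fun r hr => ?_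
    simp only [PhiHatC, ← tsum_mul_left]
    congr with n
    simp only [F, rpow_mul_natCast_eq_pow hr.1.le, mul_pow]
    push_cast
    ring

theorem phiHatC_eq_one_add (hβ : 0 < β) (hk : IntegrableOn (k 1) (Ioc 0 1)) (z : ℂ) :
    PhiHatC k β z =
      1 + z * ∫ r in Ioc (0 : ℝ) 1, (k 1 r : ℂ) * PhiHatC k β (z * ((r ^ β : ℝ) : ℂ)) := by
  rw [← (hasSum_setIntegral_mul_phiHatC hβ hk z).tsum_eq, PhiHatC,
    (summable_chat_mul_pow hβ hk z).tsum_eq_zero_add, ← tsum_mul_left]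
  simp only [chat, Complex.ofReal_one, pow_zero, mul_one, pow_succ]
  congr with n
  ring

theorem phiHatC_volterra (hβ : 0 < β) (hk : IntegrableOn (k 1) (Ioc 0 1))
    (hhom : IsHomogeneousKernel k (β - 1)) (z : ℂ) {t : ℝ} (ht : 0 < t) :
    PhiHatC k β (z * ((t ^ β : ℝ) : ℂ)) =
      1 + z * ∫ s in Ioc 0 t, (k t s : ℂ) * PhiHatC k β (z * ((s ^ β : ℝ) : ℂ)) := by
  rw [phiHatC_eq_one_add hβ hk, hhom.setIntegral_mul _ ht, sub_add_cancel, mul_assoc]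
  congr 3
  refine setIntegral_congr_fun measurableSet_Ioc fun r hr => ?_
  simp only [Real.mul_rpow ht.le hr.1.le, Complex.ofReal_mul, mul_assoc]

end Series

section Solution

variable {Ω : Type*} [MeasurableSpace Ω] {P : Measure Ω}

theorem integral_schwartzMap_comp_add [IsFiniteMeasure P] {X : Ω → ℝ} (hX : AEMeasurable X P)
    (u : SchwartzMap ℝ ℂ) (x : ℝ) :
    ∫ ω, u (x + X ω) ∂P = FTinv1 (fun p => charFn1 P X p * FT1 u p) x := by
  have hFu := integrable_ft1 u
  simp only [← integral_ftinv1_comp_add hX hFu, ftinv1_ft1 u.continuous u.integrable hFu]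

theorem lop1_integral_schwartzMap_comp_add [IsFiniteMeasure P] {X : Ω → ℝ}
    (hX : AEMeasurable X P) (u : SchwartzMap ℝ ℂ) (ψ : ℝ → ℂ) :
    Lop1 ψ (fun y => ∫ ω, u (y + X ω) ∂P) =
      FTinv1 fun p => charFn1 P X p * (-ψ p * FT1 u p) := by
  simp only [Lop1, ft1_integral_comp_add hX u.continuous.measurable u.integrable, mul_left_comm]

theorem setIntegral_mul_ftinv1 {κ : ℝ → ℂ} {I : Set ℝ} (hI : MeasurableSet I)
    (hκ : IntegrableOn κ I) {φ : ℝ → ℝ → ℂ}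
    (hφm : Measurable (Function.uncurry φ)) (hφ : ∀ s ∈ I, ∀ p, ‖φ s p‖ ≤ 1) {h : ℝ → ℂ}
    (hh : Integrable h) (x : ℝ) :
    ∫ s in I, κ s * FTinv1 (fun p => φ s p * h p) x =
      FTinv1 (fun p => (∫ s in I, κ s * φ s p) * h p) x := by
  have hint : Integrable (Function.uncurry fun s p => κ s * (φ s p * h p))
      ((volume.restrict I).prod volume) := by
    have hbound : ∀ᵐ z ∂(volume.restrict I).prod volume, ‖Function.uncurry φ z‖ ≤ 1 := by
      have hmem : ∀ᵐ z ∂(volume.restrict I).prod (volume : Measure ℝ), z.1 ∈ I :=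
        Measure.quasiMeasurePreserving_fst.ae (ae_restrict_mem hI)
      filter_upwards [hmem] with z hz using hφ z.1 hz z.2
    refine ((hκ.mul_prod hh).bdd_mul hφm.aestronglyMeasurable hbound).congr (ae_of_all _ ?_)
    rintro ⟨s, p⟩
    exact mul_left_comm _ _ _
  simp only [← ftinv1_const_mul, integral_ftinv1 hint]
  simp only [← mul_assoc, integral_mul_const]

section Volterra

variable {k : ℝ → ℝ → ℝ} {ψ : ℝ → ℂ} {φ : ℝ → ℝ → ℂ}

theorem integral_schwartzMap_comp_add_volterra [IsProbabilityMeasure P] {X : ℝ → Ω → ℝ}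
    (hX : ∀ t, 0 ≤ t → AEMeasurable (X t) P)
    (hφm : Measurable (Function.uncurry φ)) (hXφ : ∀ t, 0 ≤ t → charFn1 P (X t) = φ t)
    {t : ℝ} (ht : 0 < t) (hk : IntegrableOn (k t) (Ioc 0 t))
    (hvolterra : ∀ p, φ t p = 1 - ψ p * ∫ s in Ioc 0 t, (k t s : ℂ) * φ s p)
    {u : SchwartzMap ℝ ℂ} (hψu : Integrable fun p => ψ p * FT1 u p) (x : ℝ) :
    ∫ ω, u (x + X t ω) ∂P = u x + ∫ s in Ioc 0 t,
      (k t s : ℂ) * Lop1 ψ (fun y => ∫ ω, u (y + X s ω) ∂P) x := by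
  have hFu := integrable_ft1 u
  have hφ : ∀ s, 0 ≤ s → ∀ p, ‖φ s p‖ ≤ 1 := fun s hs p => by
    rw [← hXφ s hs]
    exact norm_charFn1_le_one (hX s hs) p
  have hψu' : Integrable fun p => -ψ p * FT1 u p := by
    simp only [neg_mul]
    exact hψu.neg
  have hφu : Integrable fun p => φ t p * FT1 u p :=
    hFu.bdd_mul (hφm.of_uncurry_left.aestronglyMeasurable) (ae_of_all _ (hφ t ht.le))
  have hdiff : Integrable fun p => φ t p * FT1 u p - FT1 u p := hφu.sub hFu
  have hkφu : ∀ p, (∫ s in Ioc 0 t, (k t s : ℂ) * φ s p) * (-ψ p * FT1 u p) =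
      φ t p * FT1 u p - FT1 u p := fun p => by rw [hvolterra p]; ring
  calc ∫ ω, u (x + X t ω) ∂P
      = FTinv1 (fun p => φ t p * FT1 u p) x := by
        rw [integral_schwartzMap_comp_add (hX t ht.le), hXφ t ht.le]
    _ = FTinv1 (fun p => FT1 u p + (φ t p * FT1 u p - FT1 u p)) x := by
        simp only [add_sub_cancel]
    _ = FTinv1 (FT1 u) x +
          FTinv1 (fun p => (∫ s in Ioc 0 t, (k t s : ℂ) * φ s p) * (-ψ p * FT1 u p)) x := by
        rw [ftinv1_add hFu hdiff]
        simp only [hkφu]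
    _ = u x + ∫ s in Ioc 0 t, (k t s : ℂ) * FTinv1 (fun p => φ s p * (-ψ p * FT1 u p)) x := by
        rw [ftinv1_ft1 u.continuous u.integrable hFu,
          setIntegral_mul_ftinv1 (κ := fun s => (k t s : ℂ)) measurableSet_Ioc hk.ofReal hφm
            (fun s hs => hφ s hs.1.le) hψu']
    _ = u x + ∫ s in Ioc 0 t, (k t s : ℂ) * Lop1 ψ (fun y => ∫ ω, u (y + X s ω) ∂P) x := by
        congr 1
        refine setIntegral_congr_fun measurableSet_Ioc fun s hs => ?_
        simp only [lop1_integral_schwartzMap_comp_add (hX s hs.1.le), hXφ s hs.1.le]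

theorem tendsto_integral_schwartzMap_comp_add [IsProbabilityMeasure P] {ι : Type*}
    {l : Filter ι} [l.IsCountablyGenerated] {X : ι → Ω → ℝ}
    (hX : ∀ᶠ i in l, AEMeasurable (X i) P)
    (hchar : ∀ p, Tendsto (fun i => charFn1 P (X i) p) l (𝓝 1)) (u : SchwartzMap ℝ ℂ) (x : ℝ) :
    Tendsto (fun i => ∫ ω, u (x + X i ω) ∂P) l (𝓝 (u x)) := by
  have hFu := integrable_ft1 u
  have hlim : Tendsto (fun i => FTinv1 (fun p => charFn1 P (X i) p * FT1 u p) x) l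
      (𝓝 (FTinv1 (FT1 u) x)) := by
    refine tendsto_ftinv1_of_dominated hFu.norm ?_ ?_ (ae_of_all _ fun p => ?_) x
    · filter_upwards [hX] with i hi
      exact (continuous_charFn1 hi).aestronglyMeasurable.mul hFu.aestronglyMeasurable
    · filter_upwards [hX] with i hi
      refine ae_of_all _ fun p => ?_
      rw [norm_mul]
      exact mul_le_of_le_one_left (norm_nonneg _) (norm_charFn1_le_one hi p)
    · simpa only [one_mul] using (hchar p).mul_const (FT1 u p)
  rw [ftinv1_ft1 u.continuous u.integrable hFu] at hlim
  refine hlim.congr' ?_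
  filter_upwards [hX] with i hi
  exact (integral_schwartzMap_comp_add hi u x).symm

theorem providesSol1_of_volterra [IsProbabilityMeasure P] {X : ℝ → Ω → ℝ}
    (hX : ∀ t, 0 ≤ t → AEMeasurable (X t) P)
    (hk : ∀ t, 0 < t → IntegrableOn (k t) (Ioc 0 t)) (hψm : AEStronglyMeasurable ψ)
    {C : ℝ} {n : ℕ} (hψ : ∀ p, ‖ψ p‖ ≤ C * (1 + |p| ^ n))
    (hφm : Measurable (Function.uncurry φ)) (hXφ : ∀ t, 0 ≤ t → charFn1 P (X t) = φ t)
    (hvolterra : ∀ t, 0 < t → ∀ p, φ t p = 1 - ψ p * ∫ s in Ioc 0 t, (k t s : ℂ) * φ s p)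
    (hφ0 : ∀ p, Tendsto (fun t => φ t p) (𝓝[>] 0) (𝓝 1)) : ProvidesSol1 P X k ψ := by
  intro u
  have hψu : Integrable fun p => ψ p * FT1 u p := integrable_mul_ft1 hψm hψ u
  refine ⟨fun s hs => ?_, fun t ht x => ?_, fun x => ?_⟩
  · simp only [ft1_integral_comp_add (hX s hs) u.continuous.measurable u.integrable,
      mul_left_comm (ψ _)]
    exact hψu.bdd_mul (continuous_charFn1 (hX s hs)).aestronglyMeasurable
      (ae_of_all _ (norm_charFn1_le_one (hX s hs)))
  · exact integral_schwartzMap_comp_add_volterra hX hφm hXφ ht (hk t ht) (hvolterra t ht) hψu x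
  · refine tendsto_integral_schwartzMap_comp_add ?_ (fun p => (hφ0 p).congr' ?_) u x
    · filter_upwards [self_mem_nhdsWithin] with t ht using hX t (le_of_lt ht)
    · filter_upwards [self_mem_nhdsWithin] with t ht
      rw [hXφ t (le_of_lt ht)]

end Volterra

theorem providesSol1_of_charFn1_eq_phiHatC [IsProbabilityMeasure P] {k : ℝ → ℝ → ℝ} {β : ℝ}
    (hβ : 0 < β) (hk : IntegrableOn (k 1) (Ioc 0 1)) (hhom : IsHomogeneousKernel k (β - 1))
    {ψ : ℝ → ℂ} (hψm : Measurable ψ) {C : ℝ} {n : ℕ} (hψ : ∀ p, ‖ψ p‖ ≤ C * (1 + |p| ^ n))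
    {X : ℝ → Ω → ℝ} (hX : ∀ t, 0 ≤ t → AEMeasurable (X t) P)
    (hchar : ∀ t, 0 ≤ t → ∀ p,
      charFn1 P (X t) p = PhiHatC k β (-ψ p * ((t ^ β : ℝ) : ℂ))) :
    ProvidesSol1 P X k ψ := by
  have hcont := continuous_phiHatC hβ hk
  refine providesSol1_of_volterra (φ := fun t p => PhiHatC k β (-ψ p * ((t ^ β : ℝ) : ℂ)))
    hX (fun t => hhom.integrableOn hk) hψm.aestronglyMeasurable hψ ?_
    (fun t ht => funext (hchar t ht)) (fun t ht p => ?_) (fun p => ?_)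
  · exact hcont.measurable.comp (by fun_prop)
  · rw [phiHatC_volterra hβ hk hhom _ ht, neg_mul, ← sub_eq_add_neg]
  · have hpow : Continuous fun t : ℝ => t ^ β := Real.continuous_rpow_const hβ.le
    have hlim : Continuous fun t : ℝ => PhiHatC k β (-ψ p * ((t ^ β : ℝ) : ℂ)) := by fun_prop
    simpa [Real.zero_rpow hβ.ne', phiHatC_zero] using
      (hlim.tendsto 0).mono_left nhdsWithin_le_nhds

end Solution

theorem abs_rpow_le_one_add_abs_pow_natCeil {γ : ℝ} (hγ : 0 ≤ γ) (p : ℝ) :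
    |p| ^ γ ≤ 1 + |p| ^ ⌈γ⌉₊ := by
  rcases le_total |p| 1 with hp | hp
  · have := Real.rpow_le_one (abs_nonneg p) hp hγ
    have : 0 ≤ |p| ^ ⌈γ⌉₊ := by positivity
    linarith
  · have := Real.rpow_le_rpow_of_exponent_le hp (Nat.le_ceil γ)
    rw [Real.rpow_natCast] at this
    linarith

theorem charFn1_rpow_mul_eq_phiHatR {k : ℝ → ℝ → ℝ} {β γ δ : ℝ} (hγ : 0 < γ) (hδ : 0 < δ)
    {Ω : Type*} [MeasurableSpace Ω] {P : Measure Ω} [IsProbabilityMeasure P] {A : Ω → ℝ}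
    (hA : AEMeasurable A P) (hA0 : 0 ≤ᵐ[P] A)
    (hALap : ∀ l : ℝ, 0 < l →
      ∫ ω, Real.exp (-(l * A ω)) ∂P = PhiHatR k β (-(l ^ (γ / δ))))
    {Y : Ω → ℝ} (hY : AEMeasurable Y P) (hYA : IndepFun Y A P) {t : ℝ} (ht : 0 ≤ t)
    (hYchar : ∀ p : ℝ,
      charFn1 P Y p = Complex.exp (-((t ^ (δ * β / γ) * |p| ^ δ : ℝ) : ℂ))) (p : ℝ) :
    charFn1 P (fun ω => A ω ^ (1 / δ) * Y ω) p = PhiHatR k β (-(|p| ^ γ * t ^ β)) := by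
  have hpow : (t ^ (δ * β / γ) * |p| ^ δ) ^ (γ / δ) = |p| ^ γ * t ^ β := by
    rw [Real.mul_rpow (by positivity) (by positivity), ← Real.rpow_mul ht,
      ← Real.rpow_mul (abs_nonneg p), mul_comm]
    congr 2 <;> field_simp
  have hl : 0 ≤ t ^ (δ * β / γ) * |p| ^ δ := by positivity
  rw [charFn1_rpow_mul_of_stable hA hA0 hY hYA hδ.ne' hYchar, ← hpow]
  congr 1
  rcases hl.eq_or_lt with hl0 | hlpos
  · have : γ / δ ≠ 0 := by positivity
    simp [← hl0, Real.zero_rpow this, phiHatR_zero]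
  · exact hALap _ hlpos

theorem stmt18_general {k : ℝ → ℝ → ℝ} {β : ℝ} (hβ : 0 < β)
    (hhom : IsHomogeneousKernel k (β - 1)) (hk : IntegrableOn (k 1) (Ioo 0 1))
    {γ δ : ℝ} (hγ : 0 < γ) (hδ : 0 < δ)
    {Ω : Type*} [MeasurableSpace Ω] {P : Measure Ω} [IsProbabilityMeasure P] {A : Ω → ℝ}
    (hA : AEMeasurable A P) (hA0 : 0 ≤ᵐ[P] A)
    (hALap : ∀ l : ℝ, 0 < l →
      ∫ ω, Real.exp (-(l * A ω)) ∂P = PhiHatR k β (-(l ^ (γ / δ))))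
    {Y : ℝ → Ω → ℝ} (hY : ∀ t, 0 ≤ t → AEMeasurable (Y t) P)
    (hYchar : ∀ t : ℝ, 0 ≤ t → ∀ p : ℝ,
      charFn1 P (Y t) p = Complex.exp (-((t ^ (δ * β / γ) * |p| ^ δ : ℝ) : ℂ)))
    (hYA : ∀ t, 0 ≤ t → IndepFun (Y t) A P) :
    CMon (fun x => PhiHatR k β (-(x ^ (γ / δ)))) ∧
    (∀ p : ℝ, ∀ t : ℝ, 0 ≤ t →
      charFn1 P (fun ω => A ω ^ (1 / δ) * Y t ω) p =
        ((PhiHatR k β (-(|p| ^ γ * t ^ β)) : ℝ) : ℂ)) ∧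
    ProvidesSol1 P (fun t ω => A ω ^ (1 / δ) * Y t ω) k
      (fun p => ((|p| ^ γ : ℝ) : ℂ)) := by
  rw [← integrableOn_Ioc_iff_integrableOn_Ioo] at hk
  have hchar : ∀ p t : ℝ, 0 ≤ t → charFn1 P (fun ω => A ω ^ (1 / δ) * Y t ω) p =
      PhiHatR k β (-(|p| ^ γ * t ^ β)) := fun p t ht =>
    charFn1_rpow_mul_eq_phiHatR hγ hδ hA hA0 hALap (hY t ht) (hYA t ht) ht (hYchar t ht) p
  refine ⟨(cmon_integral_exp_neg_mul hA hA0).congr fun l hl => (hALap l hl).symm, hchar, ?_⟩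
  refine providesSol1_of_charFn1_eq_phiHatC hβ hk hhom (C := 1) (n := ⌈γ⌉₊) (by fun_prop)
    (fun p => ?_) (fun t ht => (hA.pow_const (1 / δ)).mul (hY t ht)) (fun t ht p => ?_)
  · rw [Complex.norm_of_nonneg (by positivity), one_mul]
    exact abs_rpow_le_one_add_abs_pow_natCeil hγ.le p
  · rw [hchar p t ht, ← phiHatC_ofReal]
    push_cast
    rw [neg_mul]

theorem stmt18 (k : ℝ → ℝ → ℝ) (β : ℝ) (hβ0 : 0 < β) (hβ2 : β < 2)
    (hkm : Measurable (Function.uncurry k))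
    (hhom : ∀ t : ℝ, 0 < t → ∀ s ∈ Set.Ioo (0:ℝ) 1, k t (t * s) = t ^ (β - 1) * k 1 s)
    (ε : ℝ) (hε : 0 < ε)
    (hkL : MeasureTheory.IntegrableOn (fun s => |k 1 s| ^ (1 + ε)) (Set.Ioo 0 1))
    (hCM : CMon (fun x => PhiHatR k β (-x)))
    (γ δ : ℝ) (hγ1 : β < γ) (hγ2 : γ ≤ 2) (hδ1 : γ ≤ δ) (hδ2 : δ ≤ 2)
    {Ω : Type*} [MeasurableSpace Ω] (P : Measure Ω) [IsProbabilityMeasure P]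
    (A : Ω → ℝ) (hAm : Measurable A) (hA0 : ∀ ω, 0 ≤ A ω)
    (hALap : ∀ l : ℝ, 0 < l →
      (∫ ω, Real.exp (-(l * A ω)) ∂P) = PhiHatR k β (-(l ^ (γ / δ))))
    (Y : ℝ → Ω → ℝ) (hYm : Measurable (Function.uncurry Y))
    (hYchar : ∀ t : ℝ, 0 ≤ t → ∀ p : ℝ,
      charFn1 P (Y t) p = Complex.exp (-(((t ^ (δ * β / γ) * |p| ^ δ : ℝ)) : ℂ)))
    (hInd : ProbabilityTheory.Indep
      (⨆ t : ℝ, MeasurableSpace.comap (Y t) inferInstance)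
      (MeasurableSpace.comap A inferInstance) P) :
    CMon (fun x => PhiHatR k β (-(x ^ (γ / δ)))) ∧
    (∀ p : ℝ, ∀ t : ℝ, 0 ≤ t →
      charFn1 P (fun ω => A ω ^ (1 / δ) * Y t ω) p =
        ((PhiHatR k β (-(|p| ^ γ * t ^ β)) : ℝ) : ℂ)) ∧
    ProvidesSol1 P (fun t ω => A ω ^ (1 / δ) * Y t ω) k
      (fun p => ((|p| ^ γ : ℝ) : ℂ)) :=
  stmt18_general hβ0 hhom
    (integrable_of_integrable_abs_rpow hkm.of_uncurry_left.aestronglyMeasurable (by linarith) hkL)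
    (by linarith) (by linarith) hAm.aemeasurable (ae_of_all _ hA0) hALap
    (fun _ _ => hYm.of_uncurry_left.aemeasurable) hYchar
    fun t _ => indep_of_indep_of_le_left hInd (le_iSup (fun t => MeasurableSpace.comap (Y t) _) t)
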